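/- If H is a minimal triangulation of a finite simple graph G, then the set of all minimal separators of H is a maximal set of mutually non-crossing minimal separators of G; that is, every minimal separator of H is a minimal separator of G, no two of them cross each other, and no minimal separator of G outside this set can be added while keeping the set pairwise non-crossing. -/

import Mathlib

/-- A tree-decomposition of a graph `G` indexed by nodes of type `ι`. -/
structure TreeDecomp {V : Type} (G : SimpleGraph V) (ι : Type) where
  tree : SimpleGraph ι
  isTree : tree.IsTree
  bag : ι → Finset V
  bags_cover : ∀ v : V, ∃ i : ι, v ∈ bag i
  edges_covered : ∀ ⦃u v : V⦄, G.Adj u v → ∃ i : ι, u ∈ bag i ∧ v ∈ bag i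
  bags_connected : ∀ v : V, (tree.induce {i : ι | v ∈ bag i}).Connected

/-- The treewidth of `G`: the smallest `k` such that `G` has a tree-decomposition
all of whose bags have at most `k + 1` vertices (i.e. of width at most `k`). -/
noncomputable def treewidth {V : Type} (G : SimpleGraph V) : ℕ :=
  sInf { k : ℕ | ∃ (ι : Type) (td : TreeDecomp G ι), ∀ i : ι, (td.bag i).card ≤ k + 1 }

/-- The neighborhood `N_G(C)` of a vertex set `C`. -/
def nbhd {V : Type} (G : SimpleGraph V) (C : Set V) : Set V :=
  {v : V | v ∉ C ∧ ∃ u ∈ C, G.Adj u v}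

/-- `S` separates `a` from `b` in `G`: `a, b ∉ S` and every walk from `a` to `b` meets `S`
(so `a` and `b` lie in distinct components of `G` minus `S`). -/
def Separates {V : Type} (G : SimpleGraph V) (S : Set V) (a b : V) : Prop :=
  a ∉ S ∧ b ∉ S ∧ ∀ p : G.Walk a b, ∃ v ∈ p.support, v ∈ S

/-- `C` is a connected component of `G` minus `S`. -/
def IsCompOf {V : Type} (G : SimpleGraph V) (S : Set V) (C : Set V) : Prop :=
  C.Nonempty ∧ Disjoint C S ∧ (G.induce C).Connected ∧
    ∀ D : Set V, C ⊆ D → Disjoint D S → (G.induce D).Connected → D = C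

/-- `S` is a separator of `G`: `G` minus `S` has more than one connected component. -/
def IsSeparator {V : Type} (G : SimpleGraph V) (S : Set V) : Prop :=
  ∃ C D : Set V, IsCompOf G S C ∧ IsCompOf G S D ∧ C ≠ D

/-- `C` is a full component of `S` in `G`. -/
def IsFullCompOf {V : Type} (G : SimpleGraph V) (S : Set V) (C : Set V) : Prop :=
  IsCompOf G S C ∧ nbhd G C = S

/-- `S` is a minimal separator of `G`: it has at least two full components. -/
def IsMinSep {V : Type} (G : SimpleGraph V) (S : Set V) : Prop :=
  ∃ C D : Set V, IsFullCompOf G S C ∧ IsFullCompOf G S D ∧ C ≠ D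

/-- `R` crosses `S` if `R` separates some pair of vertices of `S`. -/
def Crosses {V : Type} (G : SimpleGraph V) (R S : Set V) : Prop :=
  ∃ a b : V, a ∈ S ∧ b ∈ S ∧ Separates G R a b

/-- `G` is chordal: every cycle with more than 3 vertices has a chord. -/
def IsChordal {V : Type} (G : SimpleGraph V) : Prop :=
  ∀ ⦃v : V⦄ (c : G.Walk v v), c.IsCycle → 3 < c.length →
    ∃ u w : V, u ∈ c.support ∧ w ∈ c.support ∧ G.Adj u w ∧ s(u, w) ∉ c.edges

/-- `H` is a triangulation of `G`. -/
def IsTriangulationOf {V : Type} (H G : SimpleGraph V) : Prop :=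
  IsChordal H ∧ G ≤ H

/-- `H` is a minimal triangulation of `G`. -/
def IsMinimalTriangulationOf {V : Type} (H G : SimpleGraph V) : Prop :=
  IsTriangulationOf H G ∧ ∀ H' : SimpleGraph V, IsTriangulationOf H' G → H' ≤ H → H' = H

/-- `K(S)`: the graph on the same vertex type whose edges join all pairs of
distinct vertices of `S`. -/
def completeOn {V : Type} (S : Set V) : SimpleGraph V :=
  SimpleGraph.fromRel (fun a b => a ∈ S ∧ b ∈ S)

/-- `s` is a maximal clique of `G`. -/
def IsMaximalClique {V : Type} (G : SimpleGraph V) (s : Set V) : Prop :=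
  G.IsClique s ∧ ∀ t : Set V, G.IsClique t → s ⊆ t → s = t

/-- `fill G td`: fill every bag of the tree-decomposition `td` into a clique. -/
def fill {V ι : Type} (G : SimpleGraph V) (td : TreeDecomp G ι) : SimpleGraph V :=
  G ⊔ SimpleGraph.fromRel (fun a b => ∃ i : ι, a ∈ td.bag i ∧ b ∈ td.bag i)

/-- The nodes of the maximal subtree `T(i,j)` of the tree containing `i` but not `j`
(for adjacent `i`, `j`): the nodes reachable from `i` after deleting the edge `{i, j}`. -/
def sideNodes {V ι : Type} {G : SimpleGraph V} (td : TreeDecomp G ι) (i j : ι) : Set ι :=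
  {t : ι | (td.tree.deleteEdges {s(i, j)}).Reachable i t}

/-- `V(i,j)`: the union of the bags of nodes in `T(i,j)`, with the vertices of the
bag of `j` removed. -/
def sideVerts {V ι : Type} {G : SimpleGraph V} (td : TreeDecomp G ι) (i j : ι) : Set V :=
  (⋃ t ∈ sideNodes td i j, (td.bag t : Set V)) \ (td.bag j : Set V)

/-- A perfect elimination order of `G`. -/
def IsPerfectElimOrder {V : Type} [Fintype V] (G : SimpleGraph V)
    (e : Fin (Fintype.card V) ≃ V) : Prop :=
  ∀ i : Fin (Fintype.card V),
    G.IsClique {u : V | G.Adj (e i) u ∧ ∃ j : Fin (Fintype.card V), i < j ∧ e j = u}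

/-- `H` is a minor of `G`, via the branch-set (minor model) characterization. -/
def IsMinorOf {W V : Type} (H : SimpleGraph W) (G : SimpleGraph V) : Prop :=
  ∃ B : W → Set V,
    (∀ w : W, (B w).Nonempty) ∧
    (∀ w : W, (G.induce (B w)).Connected) ∧
    (Pairwise fun w₁ w₂ : W => Disjoint (B w₁) (B w₂)) ∧
    ∀ ⦃w₁ w₂ : W⦄, H.Adj w₁ w₂ → ∃ a ∈ B w₁, ∃ b ∈ B w₂, G.Adj a b

/-- There is a clique minor of `G` minus `C` rooted on `R`, given by branch sets
`B v ∋ v` for `v ∈ R`: disjoint from `C`, pairwise disjoint, each connected, with an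
edge of `G` between every two of them. -/
def HasCliqueMinorRootedAvoiding {V : Type} (G : SimpleGraph V) (R C : Set V) : Prop :=
  ∃ B : R → Set V,
    (∀ v : R, (v : V) ∈ B v) ∧
    (∀ v : R, Disjoint (B v) C) ∧
    (∀ v : R, (G.induce (B v)).Connected) ∧
    (∀ u v : R, u ≠ v → Disjoint (B u) (B v)) ∧
    (∀ u v : R, u ≠ v → ∃ a ∈ B u, ∃ b ∈ B v, G.Adj a b)

/-- `S` is a minor-safe separator of `G`: for every component `C` of `G` minus `S`,
there is a clique minor of `G` minus `C` rooted on `N_G(C)`. -/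
def MinorSafe {V : Type} (G : SimpleGraph V) (S : Set V) : Prop :=
  ∀ C : Set V, IsCompOf G S C → HasCliqueMinorRootedAvoiding G (nbhd G C) C

/-!
Let `H` be a minimal triangulation of `G`. If `S` is a clique of `H`, then deleting the edges of
`H` between a component of `G` minus `S` and the vertices beyond `S` leaves a triangulation of `G`,
because a cycle meeting both sides passes through the clique `S` on two separate arcs and so has a
chord. By minimality there are no such edges, so `G` and `H` have the same components outside `S`.
Consequently, for cliques of `H`, being a minimal separator and separating a given pair mean the
same in `G` and in `H`.

By Dirac's theorem the minimal separators of the chordal graph `H` are cliques, and a clique is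
never crossed. Conversely, a minimal separator of `G` that is not one of `H` is not a clique of `H`,
so it contains two vertices nonadjacent in `H`, and some minimal separator of `H` separates them.
-/

open SimpleGraph

section Walks

variable {V : Type*} {G : SimpleGraph V}

theorem exists_isSubwalk_of_mem_support {x y u w : V} {p : G.Walk x y} (hu : u ∈ p.support)
    (hw : w ∈ p.support) :
    (∃ q : G.Walk u w, q.IsSubwalk p) ∨ ∃ q : G.Walk w u, q.IsSubwalk p := by
  classical
  rw [← p.take_spec hu, Walk.mem_support_append_iff] at hw
  obtain hw | hw := hw
  · exact Or.inr ⟨_, ((p.takeUntil u hu).isSubwalk_dropUntil hw).trans (p.isSubwalk_takeUntil hu)⟩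
  · exact Or.inl ⟨_, ((p.dropUntil u hu).isSubwalk_takeUntil hw).trans (p.isSubwalk_dropUntil hu)⟩

theorem isChordless_of_length_eq_dist {x y : V} {p : G.Walk x y} (hp : p.length = G.dist x y) :
    p.IsChordless := by
  have mem_edges_of_isSubwalk {u w : V} (h : G.Adj u w) (q : G.Walk u w) (hq : q.IsSubwalk p) :
      s(u, w) ∈ p.edges := by
    have hlen : q.length = 1 := (length_eq_dist_of_subwalk hp hq).trans (dist_eq_one_iff_adj.2 h)
    refine hq.edges_subset ?_
    match q, hlen with
    | .cons _ .nil, _ => exact List.mem_singleton_self _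
  refine Walk.isChordless_iff_forall_mem_edges.2 fun u w hu hw h => ?_
  obtain ⟨q, hq⟩ | ⟨q, hq⟩ := exists_isSubwalk_of_mem_support hu hw
  · exact mem_edges_of_isSubwalk h q hq
  · exact Sym2.eq_swap ▸ mem_edges_of_isSubwalk h.symm q hq

theorem isChordless_map {W : Type*} {K : SimpleGraph W} (f : G ↪g K) {x y : V} {p : G.Walk x y}
    (hp : p.IsChordless) : (p.map f.toHom).IsChordless := by
  rw [Walk.isChordless_iff_forall_mem_edges, Walk.support_map, Walk.edges_map]
  intro _ _ hfu hfw h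
  obtain ⟨u, hu, rfl⟩ := List.mem_map.1 hfu
  obtain ⟨w, hw, rfl⟩ := List.mem_map.1 hfw
  exact List.mem_map_of_mem (hp.mem_edges hu hw (f.map_adj_iff.1 h))

theorem exists_isPath_isChordless_of_preconnected_induce {A : Set V}
    (hA : (G.induce A).Preconnected) {x y : V} (hx : x ∈ A) (hy : y ∈ A) :
    ∃ p : G.Walk x y, p.IsPath ∧ p.IsChordless ∧ ∀ z ∈ p.support, z ∈ A := by
  obtain ⟨p, hp, hlen⟩ := (hA ⟨x, hx⟩ ⟨y, hy⟩).exists_path_of_dist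
  refine ⟨p.map (Embedding.induce A).toHom, hp.map Subtype.val_injective,
    isChordless_map (Embedding.induce A) (isChordless_of_length_eq_dist hlen), fun z hz => ?_⟩
  have hz' : z ∈ p.support.map (Embedding.induce A).toHom := p.support_map _ ▸ hz
  obtain ⟨z, -, rfl⟩ := List.mem_map.1 hz'
  exact z.2

theorem isChordless_append {x y z : V} {p : G.Walk x y} {q : G.Walk y z} (hp : p.IsChordless)
    (hq : q.IsChordless)
    (h : ∀ u ∈ p.support, ∀ w ∈ q.support, G.Adj u w → u ∈ q.support ∨ w ∈ p.support) :
    (p.append q).IsChordless := by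
  have mem_edges {u w : V} (hu : u ∈ p.support) (hw : w ∈ q.support) (huw : G.Adj u w) :
      s(u, w) ∈ (p.append q).edges := by
    rw [Walk.edges_append, List.mem_append]
    exact (h u hu w hw huw).symm.imp (hp.mem_edges hu · huw) (hq.mem_edges · hw huw)
  refine Walk.isChordless_iff_forall_mem_edges.2 fun u w hu hw huw => ?_
  obtain hu | hu := (Walk.mem_support_append_iff p q).1 hu <;>
    obtain hw | hw := (Walk.mem_support_append_iff p q).1 hw
  · exact p.edges_append q ▸ List.mem_append_left _ (hp.mem_edges hu hw huw)
  · exact mem_edges hu hw huw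
  · exact Sym2.eq_swap ▸ mem_edges hw hu huw.symm
  · exact p.edges_append q ▸ List.mem_append_right _ (hq.mem_edges hu hw huw)

theorem isChordless_rotate_iff [DecidableEq V] {u v : V} {c : G.Walk v v} (hu : u ∈ c.support) :
    (c.rotate u hu).IsChordless ↔ c.IsChordless := by
  simp only [Walk.isChordless_iff_forall_mem_edges, Walk.mem_support_rotate_iff,
    (c.rotate_edges u hu).mem_iff]

theorem isCycle_append_of_support_inter_subset {x y : V} {p : G.Walk x y} {q : G.Walk y x}
    (hp : p.IsPath) (hq : q.IsPath) (hlen : 1 < p.length)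
    (h : ∀ z ∈ p.support, z ∈ q.support → z = x ∨ z = y) : (p.append q).IsCycle := by
  refine hp.isCycle_append hq (List.disjoint_left.2 fun z hzp hzq => ?_) (Or.inl hlen)
  have hxp := hp.support_nodup
  have hyq := hq.support_nodup
  rw [← p.cons_tail_support, List.nodup_cons] at hxp
  rw [← q.cons_tail_support, List.nodup_cons] at hyq
  obtain rfl | rfl := h z (List.mem_of_mem_tail hzp) (List.mem_of_mem_tail hzq)
  exacts [hxp.1 hzp, hyq.1 hzq]

theorem eq_or_eq_of_isCycle_append {x y z : V} {p : G.Walk x y} {q : G.Walk y x}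
    (hc : (p.append q).IsCycle) (hzp : z ∈ p.support) (hzq : z ∈ q.support) : z = x ∨ z = y := by
  have hdisj := (List.nodup_append'.1 (p.tail_support_append q ▸ hc.support_nodup)).2.2
  rw [Walk.mem_support_iff] at hzp hzq
  exact hzp.imp_right fun hzp => hzq.resolve_right (hdisj hzp)

end Walks

section Components

variable {V : Type} {G : SimpleGraph V} {S C D : Set V} {u v w : V}

theorem nbhd_mono {H : SimpleGraph V} (h : G ≤ H) (C : Set V) : nbhd G C ⊆ nbhd H C :=
  fun _ ⟨hv, u, hu, huv⟩ => ⟨hv, u, hu, h huv⟩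

theorem exists_mem_support_mem_nbhd (p : G.Walk u w) (hu : u ∈ C) (hw : w ∉ C) :
    ∃ z ∈ p.support, z ∈ nbhd G C := by
  obtain ⟨d, hd, hfst, hsnd⟩ := p.exists_boundary_dart C hu hw
  exact ⟨d.snd, p.dart_snd_mem_support_of_mem_darts hd, hsnd, d.fst, hfst, d.adj⟩

theorem connected_induce_insert_of_mem_nbhd (hC : (G.induce C).Connected) (hv : v ∈ nbhd G C) :
    (G.induce (insert v C)).Connected := by
  obtain ⟨-, u, hu, huv⟩ := hv
  exact connected_induce_union (s := {v}) Preconnected.of_subsingleton hC.preconnected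
    (Set.mem_singleton v) hu huv.symm

theorem subset_of_disjoint_nbhd (hC : (G.induce C).Preconnected) (hCD : Disjoint C (nbhd G D))
    (hvC : v ∈ C) (hvD : v ∈ D) : C ⊆ D := by
  intro w hw
  by_contra hwD
  obtain ⟨p, -, -, hp⟩ := exists_isPath_isChordless_of_preconnected_induce hC hvC hw
  obtain ⟨z, hz, hzD⟩ := exists_mem_support_mem_nbhd p hvD hwD
  exact Set.disjoint_left.1 hCD (hp z hz) hzD

theorem isCompOf_iff :
    IsCompOf G S C ↔ C.Nonempty ∧ Disjoint C S ∧ (G.induce C).Connected ∧ nbhd G C ⊆ S := by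
  refine and_congr_right fun ⟨v, hv⟩ => and_congr_right fun hCS => and_congr_right fun hC =>
    ⟨fun hmax w hw => ?_, fun hsub D hCD hDS hD => ?_⟩
  · by_contra hwS
    have hins := hmax (insert w C) (Set.subset_insert w C) (Set.disjoint_insert_left.2 ⟨hwS, hCS⟩)
      (connected_induce_insert_of_mem_nbhd hC hw)
    exact hw.1 (hins ▸ Set.mem_insert w C)
  · exact (subset_of_disjoint_nbhd hD.preconnected (hDS.mono_right hsub) (hCD hv) hv).antisymm hCD

theorem IsCompOf.nbhd_subset (hC : IsCompOf G S C) : nbhd G C ⊆ S :=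
  (isCompOf_iff.1 hC).2.2.2

theorem IsCompOf.eq_of_mem (hC : IsCompOf G S C) (hD : IsCompOf G S D) (hvC : v ∈ C)
    (hvD : v ∈ D) : C = D :=
  Set.Subset.antisymm
    (subset_of_disjoint_nbhd hC.2.2.1.preconnected (hC.2.1.mono_right hD.nbhd_subset) hvC hvD)
    (subset_of_disjoint_nbhd hD.2.2.1.preconnected (hD.2.1.mono_right hC.nbhd_subset) hvD hvC)

theorem IsCompOf.not_adj (hC : IsCompOf G S C) (hD : IsCompOf G S D) (hCD : C ≠ D) (hu : u ∈ C)
    (hw : w ∈ D) : ¬ G.Adj u w := fun h =>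
  Set.disjoint_left.1 hD.2.1 hw
    (hC.nbhd_subset ⟨fun hwC => hCD (hC.eq_of_mem hD hwC hw), u, hu, h⟩)

theorem exists_isCompOf_mem (hv : v ∉ S) : ∃ C, IsCompOf G S C ∧ v ∈ C := by
  let F : Set (Set V) := {D | v ∈ D ∧ Disjoint D S ∧ (G.induce D).Connected}
  have hF : {v} ∈ F :=
    ⟨rfl, Set.disjoint_singleton_left.2 hv, Connected.of_subsingleton⟩
  have hvF : v ∈ ⋃₀ F := ⟨{v}, hF, rfl⟩
  refine ⟨⋃₀ F, ⟨⟨v, hvF⟩, Set.disjoint_sUnion_left.2 fun D hD => hD.2.1, ?_, ?_⟩, hvF⟩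
  · exact induce_sUnion_connected_of_pairwise_not_disjoint ⟨{v}, hF⟩
      (fun hD hE => ⟨v, hD.1, hE.1⟩) fun hD => hD.2.2
  · intro D hFD hDS hD
    have hDF : D ∈ F := ⟨hFD hvF, hDS, hD⟩
    exact (Set.subset_sUnion_of_mem hDF).antisymm hFD

theorem isFullCompOf_nbhd (hC : (G.induce C).Connected) : IsFullCompOf G (nbhd G C) C :=
  ⟨isCompOf_iff.2 ⟨Set.nonempty_coe_sort.1 hC.nonempty,
    Set.disjoint_right.2 fun _ h => h.1, hC, subset_rfl⟩, rfl⟩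

theorem separates_iff_forall_isCompOf {a b : V} :
    Separates G S a b ↔ a ∉ S ∧ b ∉ S ∧ ∀ C, IsCompOf G S C → a ∈ C → b ∉ C := by
  refine and_congr_right fun haS => and_congr_right fun _ => ⟨fun h C hC ha hb => ?_, fun h p => ?_⟩
  · obtain ⟨p, -, -, hp⟩ :=
      exists_isPath_isChordless_of_preconnected_induce hC.2.2.1.preconnected ha hb
    obtain ⟨z, hz, hzS⟩ := h p
    exact Set.disjoint_left.1 hC.2.1 (hp z hz) hzS
  · obtain ⟨C, hC, ha⟩ := exists_isCompOf_mem (G := G) haS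
    obtain ⟨z, hz, hzC⟩ := exists_mem_support_mem_nbhd p ha (h C hC ha)
    exact ⟨z, hz, hC.nbhd_subset hzC⟩

theorem Separates.ne {a b : V} (h : Separates G S a b) : a ≠ b := by
  rintro rfl
  obtain ⟨z, hz, hzS⟩ := h.2.2 Walk.nil
  exact h.1 (List.mem_singleton.1 hz ▸ hzS)

theorem Separates.not_adj {a b : V} (h : Separates G S a b) : ¬ G.Adj a b := by
  intro hab
  obtain ⟨z, hz, hzS⟩ := h.2.2 hab.toWalk
  obtain rfl | rfl : z = a ∨ z = b := by simpa using hz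
  exacts [h.1 hzS, h.2.1 hzS]

theorem not_crosses_of_isClique {R : Set V} (hR : G.IsClique R) : ¬ Crosses G S R :=
  fun ⟨_, _, ha, hb, h⟩ => h.not_adj (hR ha hb h.ne)

theorem exists_isMinSep_separates {x y : V} (hne : x ≠ y) (hxy : ¬ G.Adj x y) :
    ∃ R, IsMinSep G R ∧ Separates G R x y := by
  obtain ⟨D, hD, hyD⟩ := exists_isCompOf_mem (G := G) (S := insert x (G.neighborSet x)) (v := y)
    (not_or.2 ⟨hne.symm, hxy⟩)
  obtain ⟨hxD, hDx⟩ := Set.disjoint_insert_right.1 hD.2.1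
  have hxR : x ∉ nbhd G D := fun ⟨_, u, hu, hux⟩ => Set.disjoint_left.1 hDx hu hux.symm
  have hRx : nbhd G D ⊆ G.neighborSet x := (Set.subset_insert_iff_of_notMem hxR).1 hD.nbhd_subset
  have hDR := isFullCompOf_nbhd hD.2.2.1
  obtain ⟨C, hC, hxC⟩ := exists_isCompOf_mem (G := G) hxR
  have hCD : C ≠ D := fun h => hxD (h ▸ hxC)
  have hRC : nbhd G D ⊆ nbhd G C := fun r hr =>
    ⟨Set.disjoint_right.1 hC.2.1 hr, x, hxC, hRx hr⟩
  refine ⟨nbhd G D, ⟨C, D, ⟨hC, hC.nbhd_subset.antisymm hRC⟩, hDR, hCD⟩,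
    separates_iff_forall_isCompOf.2 ⟨hxR, fun h => h.1 hyD, fun E hE hxE hyE => ?_⟩⟩
  exact hxD (hE.eq_of_mem hDR.1 hyE hyD ▸ hxE)

theorem exists_isMinSep_crosses (hS : ¬ G.IsClique S) : ∃ R, IsMinSep G R ∧ Crosses G R S := by
  obtain ⟨x, hx, y, hy, hne, hxy⟩ : ∃ x ∈ S, ∃ y ∈ S, x ≠ y ∧ ¬ G.Adj x y := by
    simpa only [IsClique, Set.Pairwise, not_forall, exists_prop] using hS
  obtain ⟨R, hR, hsep⟩ := exists_isMinSep_separates hne hxy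
  exact ⟨R, hR, x, y, hx, hy, hsep⟩

end Components

section Chordal

variable {V : Type} {G H : SimpleGraph V} {S A C : Set V}

theorem isChordal_iff_not_isChordless :
    IsChordal G ↔
      ∀ ⦃v : V⦄ (c : G.Walk v v), c.IsCycle → 3 < c.length → ¬ c.IsChordless := by
  simp only [IsChordal, Walk.isChordless_iff_forall_mem_edges, not_forall, exists_prop]

theorem exists_isPath_isChordless_of_mem_nbhd (hC : (G.induce C).Connected) {x y : V}
    (hx : x ∈ nbhd G C) (hy : y ∈ nbhd G C) (hne : x ≠ y) :
    ∃ p : G.Walk x y, p.IsPath ∧ p.IsChordless ∧ ∀ z ∈ p.support, z = x ∨ z = y ∨ z ∈ C := by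
  have hx' : x ∈ nbhd G (insert y C) :=
    ⟨not_or.2 ⟨hne, hx.1⟩, hx.2.imp fun _ h => ⟨Or.inr h.1, h.2⟩⟩
  exact exists_isPath_isChordless_of_preconnected_induce
    (connected_induce_insert_of_mem_nbhd
      (connected_induce_insert_of_mem_nbhd hC hy) hx').preconnected
    (Or.inl rfl) (Or.inr (Or.inl rfl))

/-- Dirac's theorem. -/
theorem IsChordal.isClique_of_isMinSep (hG : IsChordal G) (hS : IsMinSep G S) :
    G.IsClique S := by
  obtain ⟨C, D, ⟨hC, hCS⟩, ⟨hD, hDS⟩, hCD⟩ := hS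
  intro x hx y hy hne
  by_contra hxy
  obtain ⟨p, hp, hpc, hpC⟩ :=
    exists_isPath_isChordless_of_mem_nbhd hC.2.2.1 (hCS.symm ▸ hx) (hCS.symm ▸ hy) hne
  obtain ⟨q, hq, hqc, hqD⟩ :=
    exists_isPath_isChordless_of_mem_nbhd hD.2.2.1 (hDS.symm ▸ hy) (hDS.symm ▸ hx) hne.symm
  have hpl : 1 < p.length :=
    (p.reachable.one_lt_dist_of_ne_of_not_adj hne hxy).trans_le (dist_le p)
  have hql : 1 < q.length :=
    (q.reachable.one_lt_dist_of_ne_of_not_adj hne.symm (mt Adj.symm hxy)).trans_le (dist_le q)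
  have hcycle : (p.append q).IsCycle := by
    refine isCycle_append_of_support_inter_subset hp hq hpl fun z hzp hzq => ?_
    have hz : z ∈ C → z ∉ D := fun hzC hzD => hCD (hC.eq_of_mem hD hzC hzD)
    have hzC := hpC z hzp
    have hzD := hqD z hzq
    tauto
  refine isChordal_iff_not_isChordless.1 hG _ hcycle (by rw [Walk.length_append]; omega)
    (isChordless_append hpc hqc fun u hu w hw huw => ?_)
  obtain rfl | rfl | huC := hpC u hu
  · exact Or.inl q.end_mem_support
  · exact Or.inl q.start_mem_support
  obtain rfl | rfl | hwD := hqD w hw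
  · exact Or.inr p.end_mem_support
  · exact Or.inr p.start_mem_support
  exact absurd huw (hC.not_adj hD hCD huC hwD)

theorem not_isChordless_append_of_isClique_nbhd (hA : G.IsClique (nbhd G A)) {u w : V}
    {p : G.Walk u w} {q : G.Walk w u} (hc : (p.append q).IsCycle) (hu : u ∈ A) (hwA : w ∉ A)
    (hw : w ∉ nbhd G A) : ¬ (p.append q).IsChordless := by
  obtain ⟨s, hsp, hs⟩ := exists_mem_support_mem_nbhd p hu hwA
  obtain ⟨t, htq, ht⟩ := exists_mem_support_mem_nbhd q.reverse hu hwA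
  rw [Walk.support_reverse, List.mem_reverse] at htq
  have hdisj : ∀ z ∈ nbhd G A, z ∈ p.support → z ∉ q.support := fun z hz hzp hzq =>
    (eq_or_eq_of_isCycle_append hc hzp hzq).elim (fun h => hz.1 (h ▸ hu)) fun h => hw (h ▸ hz)
  have hst : s ≠ t := fun h => hdisj s hs hsp (h ▸ htq)
  intro hchordless
  have hmem := hchordless.mem_edges ((Walk.mem_support_append_iff p q).2 (Or.inl hsp))
    ((Walk.mem_support_append_iff p q).2 (Or.inr htq)) (hA hs ht hst)
  rw [Walk.edges_append, List.mem_append] at hmem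
  obtain hmem | hmem := hmem
  · exact hdisj t ht (p.snd_mem_support_of_mem_edges hmem) htq
  · exact hdisj s hs hsp (q.fst_mem_support_of_mem_edges hmem)

theorem not_isChordless_of_isClique_nbhd (hA : G.IsClique (nbhd G A)) {v u w : V}
    {c : G.Walk v v} (hc : c.IsCycle) (hu : u ∈ c.support) (hw : w ∈ c.support) (huA : u ∈ A)
    (hwA : w ∉ A) (hwn : w ∉ nbhd G A) : ¬ c.IsChordless := by
  classical
  have hw' : w ∈ (c.rotate u hu).support := (c.mem_support_rotate_iff u hu).2 hw
  have hc' := hc.rotate hu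
  rw [← isChordless_rotate_iff hu]
  rw [← (c.rotate u hu).take_spec hw'] at hc' ⊢
  exact not_isChordless_append_of_isClique_nbhd hA hc' huA hwA hwn

theorem nbhd_sdiff_between_subset : nbhd (H \ H.between A (A ∪ S)ᶜ) A ⊆ S := by
  rintro w ⟨hwA, u, hu, huw, hcut⟩
  by_contra hwS
  exact hcut ⟨huw, Or.inl ⟨hu, not_or.2 ⟨hwA, hwS⟩⟩⟩

theorem IsChordal.sdiff_between (hH : IsChordal H) (hS : H.IsClique S) :
    IsChordal (H \ H.between A (A ∪ S)ᶜ) := by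
  set K := H \ H.between A (A ∪ S)ᶜ with hK
  have hKH : K ≤ H := sdiff_le
  have hclique : K.IsClique (nbhd K A) := fun s hs t ht hst =>
    have hsS := nbhd_sdiff_between_subset hs
    have htS := nbhd_sdiff_between_subset ht
    ⟨hS hsS htS hst, fun h => h.2.elim (fun h => hs.1 h.1) fun h => ht.1 h.2⟩
  rw [isChordal_iff_not_isChordless] at hH ⊢
  intro v c hc hlen hchordless
  have hcut {u w : V} (hu : u ∈ c.support) (hw : w ∈ c.support) (huA : u ∈ A) : w ∈ A ∪ S := by
    by_contra hwAS
    exact not_isChordless_of_isClique_nbhd hclique hc hu hw huA (fun h => hwAS (Or.inl h))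
      (fun h => hwAS (Or.inr (nbhd_sdiff_between_subset h))) hchordless
  refine hH (c.mapLe hKH) (hc.mapLe hKH) (by rwa [Walk.length_mapLe]) ?_
  rw [Walk.isChordless_iff_forall_mem_edges, Walk.support_mapLe_eq_support,
    Walk.edges_mapLe_eq_edges]
  exact fun u w hu hw huw => hchordless.mem_edges hu hw
    ⟨huw, fun h => h.2.elim (fun h => h.2 (hcut hu hw h.1)) fun h => h.1 (hcut hw hu h.2)⟩

end Chordal

section MinimalTriangulation

variable {V : Type} {G H : SimpleGraph V} {S A C : Set V}

theorem IsMinimalTriangulationOf.nbhd_subset (hH : IsMinimalTriangulationOf H G)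
    (hS : H.IsClique S) (hA : nbhd G A ⊆ S) : nbhd H A ⊆ S := by
  have hG : G ≤ H \ H.between A (A ∪ S)ᶜ := fun u w huw =>
    ⟨hH.1.2 huw, fun h => h.2.elim
      (fun ⟨hu, hw⟩ => hw (or_iff_not_imp_left.2 fun hwA => hA ⟨hwA, u, hu, huw⟩))
      fun ⟨hu, hw⟩ => hu (or_iff_not_imp_left.2 fun huA => hA ⟨huA, w, hw, huw.symm⟩)⟩
  rw [← hH.2 _ ⟨hH.1.1.sdiff_between hS, hG⟩ sdiff_le]
  exact nbhd_sdiff_between_subset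

theorem IsMinimalTriangulationOf.nbhd_eq (hH : IsMinimalTriangulationOf H G)
    (hA : H.IsClique (nbhd G A)) : nbhd H A = nbhd G A :=
  (hH.nbhd_subset hA subset_rfl).antisymm (nbhd_mono hH.1.2 A)

theorem IsMinimalTriangulationOf.isCompOf_iff (hH : IsMinimalTriangulationOf H G)
    (hS : H.IsClique S) : IsCompOf H S C ↔ IsCompOf G S C := by
  have isCompOf {C : Set V} (hC : IsCompOf G S C) : IsCompOf H S C :=
    _root_.isCompOf_iff.2
      ⟨hC.1, hC.2.1, hC.2.2.1.mono fun _ _ h => hH.1.2 h, hH.nbhd_subset hS hC.nbhd_subset⟩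
  refine ⟨fun hC => ?_, isCompOf⟩
  obtain ⟨v, hv⟩ := hC.1
  obtain ⟨D, hD, hvD⟩ := exists_isCompOf_mem (G := G) (Set.disjoint_left.1 hC.2.1 hv)
  rwa [hC.eq_of_mem (isCompOf hD) hv hvD]

theorem IsMinimalTriangulationOf.isFullCompOf_iff (hH : IsMinimalTriangulationOf H G)
    (hS : H.IsClique S) : IsFullCompOf H S C ↔ IsFullCompOf G S C := by
  rw [IsFullCompOf, IsFullCompOf, hH.isCompOf_iff hS]
  refine and_congr_right fun hC => ?_
  rw [hH.nbhd_eq (hS.subset hC.nbhd_subset)]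

theorem IsMinimalTriangulationOf.isMinSep_iff (hH : IsMinimalTriangulationOf H G)
    (hS : H.IsClique S) : IsMinSep H S ↔ IsMinSep G S := by
  simp only [IsMinSep, hH.isFullCompOf_iff hS]

theorem IsMinimalTriangulationOf.crosses_iff (hH : IsMinimalTriangulationOf H G)
    (hS : H.IsClique S) {R : Set V} : Crosses H S R ↔ Crosses G S R := by
  simp only [Crosses, separates_iff_forall_isCompOf, hH.isCompOf_iff hS]

end MinimalTriangulation

theorem minSeps_of_minimalTriangulation_maximal_general {V : Type}
    (G H : SimpleGraph V) (hH : IsMinimalTriangulationOf H G) :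
    (∀ S : Set V, IsMinSep H S → IsMinSep G S) ∧
    (∀ S R : Set V, IsMinSep H S → IsMinSep H R → ¬ Crosses G S R) ∧
    (∀ S : Set V, IsMinSep G S → ¬ IsMinSep H S →
      ∃ R : Set V, IsMinSep H R ∧ (Crosses G S R ∨ Crosses G R S)) := by
  have isClique {S : Set V} (hS : IsMinSep H S) : H.IsClique S := hH.1.1.isClique_of_isMinSep hS
  refine ⟨fun S hS => (hH.isMinSep_iff (isClique hS)).1 hS, fun S R hS hR hcross => ?_,
    fun S hS hSH => ?_⟩
  · exact not_crosses_of_isClique (isClique hR) ((hH.crosses_iff (isClique hS)).2 hcross)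
  · have hSclique : ¬ H.IsClique S := fun h => hSH ((hH.isMinSep_iff h).2 hS)
    obtain ⟨R, hR, hcross⟩ := exists_isMinSep_crosses hSclique
    exact ⟨R, hR, Or.inr ((hH.crosses_iff (isClique hR)).1 hcross)⟩

/-- the minimal separators of a minimal triangulation `H` of `G` form
a maximal set of pairwise non-crossing minimal separators of `G`. -/
theorem minSeps_of_minimalTriangulation_maximal {V : Type} [Fintype V]
    (G H : SimpleGraph V) (hH : IsMinimalTriangulationOf H G) :
    (∀ S : Set V, IsMinSep H S → IsMinSep G S) ∧
    (∀ S R : Set V, IsMinSep H S → IsMinSep H R → ¬ Crosses G S R) ∧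
    (∀ S : Set V, IsMinSep G S → ¬ IsMinSep H S →
      ∃ R : Set V, IsMinSep H R ∧ (Crosses G S R ∨ Crosses G R S)) :=
  minSeps_of_minimalTriangulation_maximal_general G H hH
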